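/- Lemma B1.6: There exist constants c > 0 and t₀ > 0 such that for all real t ≥ t₀, with R = R_max(t), |C(1,R) + D(1,R) − √(2π)·(1 − 8π/t)^{−1/4}·t^{−1/2}·exp(−i·(t − (t/2)·log(t/(2π)) + π + 2π²/t) − iπ/4)| ≤ c·t^{−2/3}. -/

import Mathlib

open MeasureTheory

/-- `a(t) = √(8t/π)` -/
noncomputable def a (t : ℝ) : ℝ := Real.sqrt (8 * t / Real.pi)

/-- `pc(α,t) = 2(α/a(t))²·(1 + √(1 − (a(t)/α)²)) − 1` -/
noncomputable def pc (α t : ℝ) : ℝ :=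
  2 * (α / a t) ^ 2 * (1 + Real.sqrt (1 - (a t / α) ^ 2)) - 1

/-- The integrand of `C(N,R)`, with `pc_+(u) = pc(t(1 + 1/u)/π, t)`. -/
noncomputable def Cfun (N : ℕ) (t : ℝ) (u : ℝ) : ℂ :=
  Complex.exp (-Complex.I * ((t * (N : ℝ) * (1 + 1 / u) : ℝ) : ℂ) +
      Complex.I * ((t / 2 : ℝ) : ℂ) *
        ((Real.log (pc (t * (1 + 1 / u) / Real.pi) t) +
            1 / pc (t * (1 + 1 / u) / Real.pi) t : ℝ) : ℂ)) /
    (((u ^ 2 * ((1 + 1 / u) ^ 2 - 8 * Real.pi / t) ^ ((1 : ℝ) / 4) : ℝ)) : ℂ)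

/-- `C(N,R)` -/
noncomputable def Cint (N : ℕ) (R t : ℝ) : ℂ :=
  ∫ u in Set.Ioi (t / (Real.pi * R)), Cfun N t u

/-- The integrand of `D(N,R)`, with `pc_−(u) = pc(t(1 − 1/u)/π, t)`. -/
noncomputable def Dfun (N : ℕ) (t : ℝ) (u : ℝ) : ℂ :=
  Complex.exp (-Complex.I * ((t * (N : ℝ) * (1 - 1 / u) : ℝ) : ℂ) +
      Complex.I * ((t / 2 : ℝ) : ℂ) *
        ((Real.log (pc (t * (1 - 1 / u) / Real.pi) t) +
            1 / pc (t * (1 - 1 / u) / Real.pi) t : ℝ) : ℂ)) /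
    (((u ^ 2 * ((1 - 1 / u) ^ 2 - 8 * Real.pi / t) ^ ((1 : ℝ) / 4) : ℝ)) : ℂ)

/-- `D(N,R)` -/
noncomputable def Dint (N : ℕ) (R t : ℝ) : ℂ :=
  ∫ u in Set.Ioi (t / (Real.pi * R)), Dfun N t u

/-- `η = (1/2)(1250/π³)^{1/6}` -/
noncomputable def eta : ℝ := (1 / 2) * (1250 / Real.pi ^ 3) ^ ((1 : ℝ) / 6)

/-- `pc_− = 1 + η√(8π)·t^{−1/3}` -/
noncomputable def pcm (t : ℝ) : ℝ := 1 + eta * Real.sqrt (8 * Real.pi) * t ^ (-(1 : ℝ) / 3)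

/-- `R_max = t/π − a(t)(pc_− + 1)/(2√pc_−)` -/
noncomputable def Rmax (t : ℝ) : ℝ :=
  t / Real.pi - a t * (pcm t + 1) / (2 * Real.sqrt (pcm t))

/-!
In the variables `x = 1 ± 1/u` the integrals `C` and `D` have the same integrand and adjacent
ranges, so their sum is a single integral over `[1 - πR/t, 1 + πR/t]`. With `δ = 2π/t`, the
Joukowski substitution `x = z + δ/z` gives `pc = z²/δ` and removes the square roots: the phase
becomes `t φ(z)` with `φ'(z) = (1 - z)(1 - δ/z²)/z`, the amplitude `√((1 - δ/z²)/z)`, and the only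
stationary point in the range `δ < z²` is `z = 1`.

On a window of width `t^{-1/3}` around `1`, put `y = z - 1` and `s = y - y²/3`: up to
`O(y⁴ + δ y²)`, `φ` is `-(1 + δ/2) - s²/2`, so the integral is compared with a Fresnel integral in
`s`. Elsewhere one integrates by parts; the quotient of the amplitude by `φ'` is a product of a
monotone and an antitone factor, which bounds its total variation. The factor `1/√(1 - δ/z²)` blows
up at `z = √δ`, and the choice of `R_max` keeps `1 - δ/z²` of order `t^{-1/3}` at the left endpoint.
-/

section

open Set Filter Topology
open scoped Interval Real
open Complex (I)

theorem norm_integral_exp_mul_deriv_mul_le {F F' : ℝ → ℂ} {q : ℝ → ℝ} {x y : ℝ} (hxy : x ≤ y)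
    (hF : ∀ z ∈ Icc x y, HasDerivAt F (F' z) z) (hF' : ContinuousOn F' (Icc x y))
    (hre : ∀ z ∈ Icc x y, (F z).re ≤ 0) (hq : ∀ z ∈ Icc x y, DifferentiableAt ℝ q z)
    (hq' : IntervalIntegrable (deriv q) volume x y) :
    ‖∫ z in x..y, Complex.exp (F z) * F' z * q z‖ ≤ |q x| + |q y| + ∫ z in x..y, |deriv q z| := by
  have hexp : ∀ z ∈ Icc x y, ‖Complex.exp (F z)‖ ≤ 1 := fun z hz => by
    simpa [Complex.norm_exp] using hre z hz
  have hmul : ∀ z ∈ Icc x y, ∀ r : ℝ, ‖(r : ℂ) * Complex.exp (F z)‖ ≤ |r| := fun z hz r => by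
    rw [norm_mul, Complex.norm_real, Real.norm_eq_abs]
    exact mul_le_of_le_one_right (abs_nonneg r) (hexp z hz)
  rw [← uIcc_of_le hxy] at hF hF' hq
  have hparts := intervalIntegral.integral_mul_deriv_eq_deriv_mul
    (fun z hz => (hq z hz).hasDerivAt.ofReal_comp) (fun z hz => (hF z hz).cexp)
    ⟨hq'.1.ofReal, hq'.2.ofReal⟩
    (ContinuousOn.mul (fun z hz => (hF z hz).continuousAt.cexp.continuousWithinAt)
      hF').intervalIntegrable
  have hint : ‖∫ z in x..y, ((deriv q z : ℝ) : ℂ) * Complex.exp (F z)‖ ≤ ∫ z in x..y, |deriv q z| :=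
    intervalIntegral.norm_integral_le_of_norm_le hxy
      (.of_forall fun z hz => hmul z (Ioc_subset_Icc_self hz) _) hq'.abs
  simp only [mul_comm _ ((q _ : ℝ) : ℂ)]
  rw [hparts, add_comm |q x|]
  exact (norm_sub_le _ _).trans (add_le_add ((norm_sub_le _ _).trans
    (add_le_add (hmul y (right_mem_Icc.2 hxy) _) (hmul x (left_mem_Icc.2 hxy) _))) hint)

theorem abs_deriv_mul_le_of_monotoneOn_antitoneOn {q₁ q₂ : ℝ → ℝ} {x y z : ℝ} (hz : z ∈ Ioo x y)
    (hd₁ : DifferentiableAt ℝ q₁ z) (hd₂ : DifferentiableAt ℝ q₂ z)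
    (hm₁ : MonotoneOn q₁ (Icc x y)) (hm₂ : AntitoneOn q₂ (Icc x y))
    (h₁ : 0 ≤ q₁ x) (h₂ : 0 ≤ q₂ y) :
    |deriv (fun w => q₁ w * q₂ w) z| ≤ deriv q₁ z * q₂ x + q₁ y * deriv (fun w => -q₂ w) z := by
  have hz' := Ioo_subset_Icc_self hz
  have hx : x ∈ Icc x y := left_mem_Icc.2 (hz'.1.trans hz'.2)
  have hy : y ∈ Icc x y := right_mem_Icc.2 (hz'.1.trans hz'.2)
  have hn := Icc_mem_nhds hz.1 hz.2
  have hq₁' : 0 ≤ deriv q₁ z := by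
    simpa only [derivWithin_of_mem_nhds hn] using hm₁.derivWithin_nonneg (x := z)
  have hq₂' : 0 ≤ deriv (fun w => -q₂ w) z := by
    simpa only [derivWithin_of_mem_nhds hn] using hm₂.neg.derivWithin_nonneg (x := z)
  have hderiv : deriv (fun w => q₁ w * q₂ w) z =
      deriv q₁ z * q₂ z - q₁ z * deriv (fun w => -q₂ w) z := by
    rw [deriv_fun_mul hd₁ hd₂, deriv.fun_neg]
    ring
  rw [hderiv]
  refine (abs_sub _ _).trans (add_le_add ?_ ?_)
  · rw [abs_mul, abs_of_nonneg hq₁', abs_of_nonneg (h₂.trans (hm₂ hz' hy hz'.2))]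
    exact mul_le_mul_of_nonneg_left (hm₂ hx hz' hz'.1) hq₁'
  · rw [abs_mul, abs_of_nonneg hq₂', abs_of_nonneg (h₁.trans (hm₁ hx hz' hz'.1))]
    exact mul_le_mul_of_nonneg_right (hm₁ hz' hy hz'.2) hq₂'

theorem intervalIntegrable_deriv_mul_of_monotoneOn_antitoneOn {q₁ q₂ : ℝ → ℝ} {x y : ℝ}
    (hxy : x ≤ y)
    (hd₁ : ∀ z ∈ Icc x y, DifferentiableAt ℝ q₁ z) (hd₂ : ∀ z ∈ Icc x y, DifferentiableAt ℝ q₂ z)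
    (hm₁ : MonotoneOn q₁ (Icc x y)) (hm₂ : AntitoneOn q₂ (Icc x y)) :
    IntervalIntegrable (deriv fun z => q₁ z * q₂ z) volume x y := by
  rw [← uIcc_of_le hxy] at hd₁ hd₂ hm₁ hm₂
  have hi₂ : IntervalIntegrable (deriv q₂) volume x y := by
    simpa [Pi.neg_def, deriv.fun_neg] using hm₂.neg.intervalIntegrable_deriv.neg
  have hderiv : EqOn (fun z => deriv q₁ z * q₂ z + q₁ z * deriv q₂ z)
      (deriv fun z => q₁ z * q₂ z) (Ι x y) := fun z hz =>
    (deriv_fun_mul (hd₁ z (uIoc_subset_uIcc hz)) (hd₂ z (uIoc_subset_uIcc hz))).symm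
  exact ((hm₁.intervalIntegrable_deriv.mul_continuousOn
      fun z hz => (hd₂ z hz).continuousAt.continuousWithinAt).add
    (hi₂.continuousOn_mul fun z hz => (hd₁ z hz).continuousAt.continuousWithinAt)).congr hderiv

theorem integral_abs_deriv_mul_le_of_monotoneOn_antitoneOn {q₁ q₂ : ℝ → ℝ} {x y : ℝ} (hxy : x ≤ y)
    (hd₁ : ∀ z ∈ Icc x y, DifferentiableAt ℝ q₁ z) (hd₂ : ∀ z ∈ Icc x y, DifferentiableAt ℝ q₂ z)
    (hm₁ : MonotoneOn q₁ (Icc x y)) (hm₂ : AntitoneOn q₂ (Icc x y))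
    (h₁ : 0 ≤ q₁ x) (h₂ : 0 ≤ q₂ y) :
    ∫ z in x..y, |deriv (fun z => q₁ z * q₂ z) z| ≤ 2 * (q₁ y * q₂ x) := by
  have hx : x ∈ Icc x y := left_mem_Icc.2 hxy
  have hy : y ∈ Icc x y := right_mem_Icc.2 hxy
  have hu : uIcc x y = Icc x y := uIcc_of_le hxy
  have hmono₁ : MonotoneOn q₁ (uIcc x y) := hu ▸ hm₁
  have hmono₂ : MonotoneOn (fun z => -q₂ z) (uIcc x y) := hu ▸ hm₂.neg
  have hi₁ := hmono₁.intervalIntegrable_deriv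
  have hi₂ := hmono₂.intervalIntegrable_deriv
  have hv₁ := hmono₁.intervalIntegral_deriv_mem_uIcc
  have hv₂ := hmono₂.intervalIntegral_deriv_mem_uIcc
  rw [uIcc_of_le (sub_nonneg.2 (hm₁ hx hy hxy))] at hv₁
  rw [uIcc_of_le (sub_nonneg.2 (neg_le_neg (hm₂ hx hy hxy)))] at hv₂
  calc ∫ z in x..y, |deriv (fun z => q₁ z * q₂ z) z|
      ≤ ∫ z in x..y, (deriv q₁ z * q₂ x + q₁ y * deriv (fun w => -q₂ w) z) :=
        intervalIntegral.integral_mono_on_of_le_Ioo hxy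
          (intervalIntegrable_deriv_mul_of_monotoneOn_antitoneOn hxy hd₁ hd₂ hm₁ hm₂).abs
          ((hi₁.mul_const _).add (hi₂.const_mul _)) fun z hz =>
            abs_deriv_mul_le_of_monotoneOn_antitoneOn hz (hd₁ z (Ioo_subset_Icc_self hz))
              (hd₂ z (Ioo_subset_Icc_self hz)) hm₁ hm₂ h₁ h₂
    _ = (∫ z in x..y, deriv q₁ z) * q₂ x + q₁ y * ∫ z in x..y, deriv (fun w => -q₂ w) z := by
        rw [intervalIntegral.integral_add (hi₁.mul_const _) (hi₂.const_mul _),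
          intervalIntegral.integral_mul_const, intervalIntegral.integral_const_mul]
    _ ≤ (q₁ y - q₁ x) * q₂ x + q₁ y * (-q₂ y - -q₂ x) := by
        gcongr
        · exact h₂.trans (hm₂ hx hy hxy)
        · exact hv₁.2
        · exact h₁.trans (hm₁ hx hy hxy)
        · exact hv₂.2
    _ ≤ 2 * (q₁ y * q₂ x) := by
        nlinarith [mul_nonneg h₁ (h₂.trans (hm₂ hx hy hxy)),
          mul_nonneg (h₁.trans (hm₁ hx hy hxy)) h₂]

theorem norm_integral_exp_mul_deriv_mul_le_of_monotoneOn_antitoneOn {F F' : ℝ → ℂ} {q₁ q₂ : ℝ → ℝ}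
    {x y : ℝ} (hxy : x ≤ y)
    (hF : ∀ z ∈ Icc x y, HasDerivAt F (F' z) z) (hF' : ContinuousOn F' (Icc x y))
    (hre : ∀ z ∈ Icc x y, (F z).re ≤ 0)
    (hd₁ : ∀ z ∈ Icc x y, DifferentiableAt ℝ q₁ z) (hd₂ : ∀ z ∈ Icc x y, DifferentiableAt ℝ q₂ z)
    (hm₁ : MonotoneOn q₁ (Icc x y)) (hm₂ : AntitoneOn q₂ (Icc x y))
    (h₁ : 0 ≤ q₁ x) (h₂ : 0 ≤ q₂ y) :
    ‖∫ z in x..y, Complex.exp (F z) * F' z * (q₁ z * q₂ z : ℝ)‖ ≤ 4 * (q₁ y * q₂ x) := by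
  have hx : x ∈ Icc x y := left_mem_Icc.2 hxy
  have hy : y ∈ Icc x y := right_mem_Icc.2 hxy
  have hq₁ : q₁ x ≤ q₁ y := hm₁ hx hy hxy
  have hq₂ : q₂ y ≤ q₂ x := hm₂ hx hy hxy
  have hq₁y := h₁.trans hq₁
  have hq₂x := h₂.trans hq₂
  have hint := intervalIntegrable_deriv_mul_of_monotoneOn_antitoneOn hxy hd₁ hd₂ hm₁ hm₂
  have hvar := integral_abs_deriv_mul_le_of_monotoneOn_antitoneOn hxy hd₁ hd₂ hm₁ hm₂ h₁ h₂
  refine (norm_integral_exp_mul_deriv_mul_le hxy hF hF' hre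
    (fun z hz => (hd₁ z hz).fun_mul (hd₂ z hz)) hint).trans ?_
  rw [abs_of_nonneg (mul_nonneg h₁ hq₂x), abs_of_nonneg (mul_nonneg hq₁y h₂)]
  linarith [mul_le_mul_of_nonneg_right hq₁ hq₂x, mul_le_mul_of_nonneg_left hq₂ hq₁y]

theorem norm_integral_exp_mul_I_mul_le {Φ Φ' w q₁ q₂ : ℝ → ℝ} {x y c : ℝ} (hxy : x ≤ y)
    (hΦ : ∀ z ∈ Icc x y, HasDerivAt Φ (Φ' z) z) (hΦ' : ContinuousOn Φ' (Icc x y))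
    (hw : ∀ z ∈ Icc x y, w z = c * (Φ' z * (q₁ z * q₂ z)))
    (hd₁ : ∀ z ∈ Icc x y, DifferentiableAt ℝ q₁ z) (hd₂ : ∀ z ∈ Icc x y, DifferentiableAt ℝ q₂ z)
    (hm₁ : MonotoneOn q₁ (Icc x y)) (hm₂ : AntitoneOn q₂ (Icc x y))
    (h₁ : 0 ≤ q₁ x) (h₂ : 0 ≤ q₂ y) :
    ‖∫ z in x..y, Complex.exp (Φ z * I) * w z‖ ≤ 4 * |c| * (q₁ y * q₂ x) := by
  have hparts := norm_integral_exp_mul_deriv_mul_le_of_monotoneOn_antitoneOn hxy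
    (F := fun z => Φ z * I) (F' := fun z => Φ' z * I)
    (fun z hz => (hΦ z hz).ofReal_comp.mul_const I)
    ((Complex.continuous_ofReal.comp_continuousOn hΦ').mul continuousOn_const)
    (fun z _ => by simp) hd₁ hd₂ hm₁ hm₂ h₁ h₂
  have hfactor : ∫ z in x..y, Complex.exp (Φ z * I) * w z = (-I * c) *
      ∫ z in x..y, Complex.exp (Φ z * I) * (Φ' z * I) * ((q₁ z * q₂ z : ℝ) : ℂ) := by
    rw [← intervalIntegral.integral_const_mul]
    refine intervalIntegral.integral_congr fun z hz => ?_
    simp only [hw z (uIcc_of_le hxy ▸ hz)]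
    push_cast
    linear_combination (c * Complex.exp (Φ z * I) * Φ' z * (q₁ z * q₂ z)) * Complex.I_sq
  rw [hfactor, norm_mul, norm_mul, norm_neg, Complex.norm_I, one_mul, Complex.norm_real,
    Real.norm_eq_abs, mul_comm 4, mul_assoc]
  exact mul_le_mul_of_nonneg_left hparts (abs_nonneg c)

theorem norm_integral_exp_neg_mul_sq_le {b : ℂ} (hb : b ≠ 0) (hre : 0 ≤ b.re) {x y : ℝ}
    (hx : 0 < x) (hxy : x ≤ y) :
    ‖∫ s in x..y, Complex.exp (-b * (s : ℂ) ^ 2)‖ ≤ 2 / (‖b‖ * x) := by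
  have hpos : ∀ s ∈ Icc x y, 0 < s := fun s hs => hx.trans_le hs.1
  have hparts := norm_integral_exp_mul_deriv_mul_le_of_monotoneOn_antitoneOn hxy
    (F := fun s => -b * (s : ℂ) ^ 2) (F' := fun s => -b * (2 * s)) (q₁ := fun _ => 1)
    (q₂ := fun s => s⁻¹)
    (fun s _ => by simpa using ((hasDerivAt_pow 2 (s : ℂ)).const_mul (-b)).comp_ofReal)
    (by fun_prop)
    (fun s _ => by
      rw [← Complex.ofReal_pow, Complex.re_mul_ofReal, Complex.neg_re]
      nlinarith [sq_nonneg s])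
    (fun _ _ => differentiableAt_const _)
    (fun s hs => differentiableAt_inv (hpos s hs).ne') monotoneOn_const
    (fun s hs _ _ h => inv_anti₀ (hpos s hs) h) zero_le_one (inv_nonneg.2 (hx.le.trans hxy))
  have hamp : ∫ s in x..y, Complex.exp (-b * (s : ℂ) ^ 2) =
      -(2 * b)⁻¹ * ∫ s in x..y, Complex.exp (-b * (s : ℂ) ^ 2) * (-b * (2 * s)) *
        ((1 * s⁻¹ : ℝ) : ℂ) := by
    rw [← intervalIntegral.integral_const_mul]
    refine intervalIntegral.integral_congr fun s hs => ?_
    have hs0 : (s : ℂ) ≠ 0 := by exact_mod_cast (hpos s (uIcc_of_le hxy ▸ hs)).ne'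
    push_cast
    field_simp
  rw [hamp, norm_mul, norm_neg, norm_inv, norm_mul, Complex.norm_ofNat]
  calc (2 * ‖b‖)⁻¹ * _ ≤ (2 * ‖b‖)⁻¹ * (4 * (1 * x⁻¹)) := by gcongr
    _ = 2 / (‖b‖ * x) := by
      have := norm_ne_zero_iff.2 hb
      field_simp
      norm_num

theorem norm_integral_exp_neg_mul_sq_sub_le_of_re_pos {b : ℂ} (hre : 0 < b.re) {x y : ℝ}
    (hx : 0 < x) (hy : 0 < y) :
    ‖(∫ s in -x..y, Complex.exp (-b * (s : ℂ) ^ 2)) - (π / b) ^ (1 / 2 : ℂ)‖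
      ≤ 2 / (‖b‖ * x) + 2 / (‖b‖ * y) := by
  have hb : b ≠ 0 := by rintro rfl; simp at hre
  have hint := integrable_cexp_neg_mul_sq hre
  have hlim := intervalIntegral_tendsto_integral hint tendsto_neg_atTop_atBot tendsto_id
  rw [integral_gaussian_complex hre] at hlim
  refine le_of_tendsto (tendsto_const_nhds.sub hlim).norm ?_
  filter_upwards [eventually_ge_atTop (max x y)] with z hz
  have hii : ∀ p q : ℝ, IntervalIntegrable (fun s : ℝ => Complex.exp (-b * (s : ℂ) ^ 2))
      volume p q := fun _ _ => hint.intervalIntegrable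
  have hreflect : ∫ s in -z..-x, Complex.exp (-b * (s : ℂ) ^ 2) =
      ∫ s in x..z, Complex.exp (-b * (s : ℂ) ^ 2) := by
    rw [← intervalIntegral.integral_comp_neg]
    simp only [Complex.ofReal_neg, neg_sq]
  rw [id, ← intervalIntegral.integral_add_adjacent_intervals (hii (-z) y) (hii y z),
    ← intervalIntegral.integral_add_adjacent_intervals (hii (-z) (-x)) (hii (-x) y), hreflect,
    add_right_comm, sub_add_cancel_right, norm_neg]
  exact (norm_add_le _ _).trans (add_le_add
    (norm_integral_exp_neg_mul_sq_le hb hre.le hx ((le_max_left _ _).trans hz))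
    (norm_integral_exp_neg_mul_sq_le hb hre.le hy ((le_max_right _ _).trans hz)))

theorem norm_integral_exp_neg_mul_sq_sub_le {b : ℂ} (hb : b ≠ 0) (hre : 0 ≤ b.re) {x y : ℝ}
    (hx : 0 < x) (hy : 0 < y) :
    ‖(∫ s in -x..y, Complex.exp (-b * (s : ℂ) ^ 2)) - (π / b) ^ (1 / 2 : ℂ)‖
      ≤ 2 / (‖b‖ * x) + 2 / (‖b‖ * y) := by
  have hslit : (π : ℂ) / b ∈ Complex.slitPlane := by
    have hb2 : 0 < Complex.normSq b := Complex.normSq_pos.2 hb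
    rw [div_eq_mul_inv, Complex.mem_slitPlane_iff, Complex.re_ofReal_mul, Complex.im_ofReal_mul,
      Complex.inv_re, Complex.inv_im]
    refine hre.lt_or_eq.imp (fun h => by positivity) fun h => ?_
    have him : b.im ≠ 0 := fun him => hb (Complex.ext h.symm him)
    simp [Real.pi_ne_zero, him, hb]
  have hleft : Continuous fun r : ℝ => ∫ s in -x..y, Complex.exp (-(b + r) * (s : ℂ) ^ 2) :=
    intervalIntegral.continuous_parametric_intervalIntegral_of_continuous' (by fun_prop) _ _
  have hright : ContinuousAt (fun r : ℝ => ((π : ℂ) / (b + r)) ^ (1 / 2 : ℂ)) 0 := by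
    refine ContinuousAt.cpow ?_ continuousAt_const (by simpa using hslit)
    exact continuousAt_const.div (by fun_prop) (by simpa using hb)
  have hlim : Tendsto (fun r : ℝ => 2 / (‖b + r‖ * x) + 2 / (‖b + r‖ * y)) (𝓝 0)
      (𝓝 (2 / (‖b‖ * x) + 2 / (‖b‖ * y))) := by
    have hc : ContinuousAt (fun r : ℝ => 2 / (‖b + r‖ * x) + 2 / (‖b + r‖ * y)) 0 := by
      refine .add ?_ ?_ <;> refine continuousAt_const.div (by fun_prop) ?_ <;>
        simp [hb, hx.ne', hy.ne']
    simpa using hc.tendsto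
  have hdiff := ((hleft.continuousAt (x := 0)).sub hright).norm.tendsto
  simp only [Pi.sub_apply, Complex.ofReal_zero, add_zero] at hdiff
  refine le_of_tendsto_of_tendsto (hdiff.mono_left nhdsWithin_le_nhds)
    (hlim.mono_left nhdsWithin_le_nhds) (b := 𝓝[>] 0) ?_
  filter_upwards [self_mem_nhdsWithin] with r hr
  exact norm_integral_exp_neg_mul_sq_sub_le_of_re_pos
    (by simpa using add_pos_of_nonneg_of_pos hre hr) hx hy

theorem norm_integral_fresnel_sub_le {t x y : ℝ} (ht : 0 < t) (hx : 0 < x) (hy : 0 < y) :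
    ‖(∫ s in -x..y, Complex.exp ((-(t / 2 * s ^ 2) : ℝ) * I))
      - √(2 * π / t) * Complex.exp (-(π / 4 : ℝ) * I)‖ ≤ 4 / (t * x) + 4 / (t * y) := by
  have hb : (t / 2 : ℝ) * I ≠ 0 := by simp [ht.ne']
  have hpow : ((π : ℂ) / ((t / 2 : ℝ) * I)) ^ (1 / 2 : ℂ) =
      √(2 * π / t) * Complex.exp (-(π / 4 : ℝ) * I) := by
    have hr : 0 < 2 * π / t := by positivity
    have hdiv : (π : ℂ) / ((t / 2 : ℝ) * I) = (2 * π / t : ℝ) * -I := by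
      rw [div_eq_iff hb, mul_mul_mul_comm, neg_mul, Complex.I_mul_I, neg_neg, mul_one,
        ← Complex.ofReal_mul]
      congr 1
      field_simp
    rw [hdiv, Real.sqrt_eq_rpow, Real.rpow_def_of_pos hr, Complex.ofReal_exp, ← Complex.exp_add,
      Complex.cpow_def_of_ne_zero (by simp [Real.pi_ne_zero, ht.ne']),
      Complex.log_ofReal_mul hr (by simp), Complex.log_neg_I]
    congr 1
    push_cast
    ring
  have hexp : ∀ s : ℝ, Complex.exp ((-(t / 2 * s ^ 2) : ℝ) * I) =
      Complex.exp (-((t / 2 : ℝ) * I) * (s : ℂ) ^ 2) := fun s => by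
    push_cast
    ring_nf
  have hnorm : ∀ z, 2 / (‖((t / 2 : ℝ) * I : ℂ)‖ * z) = 4 / (t * z) := fun z => by
    rw [norm_mul, Complex.norm_I, Complex.norm_real, Real.norm_of_nonneg (by positivity)]
    field_simp
    norm_num
  simp only [hexp, ← hpow, ← hnorm]
  exact norm_integral_exp_neg_mul_sq_sub_le hb (by simp) hx hy

theorem integral_Ioi_inv_sq_smul_comp_inv {E : Type*} [NormedAddCommGroup E] [NormedSpace ℝ E]
    (f : ℝ → E) {r : ℝ} (hr : 0 < r) :
    ∫ u in Ioi r⁻¹, (u ^ 2)⁻¹ • f u⁻¹ = ∫ v in 0..r, f v := by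
  have himage : (fun u : ℝ => u⁻¹) '' Ioi r⁻¹ = Ioo 0 r := by
    rw [image_inv_eq_inv, Set.inv_Ioi₀ (inv_pos.2 hr), inv_inv]
  rw [intervalIntegral.integral_of_le hr.le, integral_Ioc_eq_integral_Ioo, ← himage,
    integral_image_eq_integral_abs_deriv_smul measurableSet_Ioi
      (fun u hu => (hasDerivAt_inv ((inv_pos.2 hr).trans hu).ne').hasDerivWithinAt)
      inv_injective.injOn]
  simp only [abs_neg, abs_inv, abs_sq]

/-- The common integrand of `C(N,R)` and `D(N,R)` in the variable `x = 1 ± 1/u`, without the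
Jacobian factor `u⁻²`. -/
noncomputable def commonIntegrand (N : ℕ) (t x : ℝ) : ℂ :=
  Complex.exp (-I * (t * N * x : ℝ) + I * (t / 2 : ℝ) *
    (Real.log (pc (t * x / π) t) + 1 / pc (t * x / π) t : ℝ)) /
    ((x ^ 2 - 8 * π / t) ^ ((1 : ℝ) / 4) : ℝ)

theorem Cfun_eq_smul_commonIntegrand (N : ℕ) (t u : ℝ) :
    Cfun N t u = (u ^ 2)⁻¹ • commonIntegrand N t (1 + u⁻¹) := by
  rw [Cfun, commonIntegrand, one_div u, Complex.real_smul]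
  push_cast
  rw [← div_div, div_right_comm, div_eq_inv_mul, mul_div_assoc]

theorem Dfun_eq_smul_commonIntegrand (N : ℕ) (t u : ℝ) :
    Dfun N t u = (u ^ 2)⁻¹ • commonIntegrand N t (1 - u⁻¹) := by
  rw [Dfun, commonIntegrand, one_div u, Complex.real_smul]
  push_cast
  rw [← div_div, div_right_comm, div_eq_inv_mul, mul_div_assoc]

theorem pc_pos {t x : ℝ} (ht : 0 < t) (hx : 8 * π / t ≤ x ^ 2) : 0 < pc (t * x / π) t := by
  have ha : 0 < a t := Real.sqrt_pos.2 (by positivity)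
  have hle : 1 ≤ (t * x / π / a t) ^ 2 := by
    rw [div_pow, one_le_div (by positivity), a, Real.sq_sqrt (by positivity)]
    rw [div_le_iff₀ ht] at hx
    field_simp
    linarith
  rw [pc]
  nlinarith [Real.sqrt_nonneg (1 - (a t / (t * x / π)) ^ 2)]

theorem continuousOn_commonIntegrand (N : ℕ) {t : ℝ} (ht : 0 < t) :
    ContinuousOn (commonIntegrand N t) {x | 0 < x ∧ 8 * π / t < x ^ 2} := by
  have hpc : ContinuousOn (fun x => pc (t * x / π) t) {x | 0 < x ∧ 8 * π / t < x ^ 2} := by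
    unfold pc
    have : ∀ x ∈ {x | 0 < x ∧ 8 * π / t < x ^ 2}, t * x / π ≠ 0 := fun x hx =>
      (div_pos (mul_pos ht hx.1) Real.pi_pos).ne'
    fun_prop (disch := assumption)
  have hpc' : ∀ x ∈ {x | 0 < x ∧ 8 * π / t < x ^ 2}, pc (t * x / π) t ≠ 0 := fun x hx =>
    (pc_pos ht hx.2.le).ne'
  unfold commonIntegrand
  refine ContinuousOn.div (ContinuousOn.cexp (ContinuousOn.add (by fun_prop)
    (ContinuousOn.mul continuousOn_const ?_))) ?_ fun x hx => ?_
  · exact Complex.continuous_ofReal.comp_continuousOn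
      ((hpc.log hpc').add (continuousOn_const.div hpc hpc'))
  · refine Complex.continuous_ofReal.comp_continuousOn
      (ContinuousOn.rpow_const (by fun_prop) fun _ _ => ?_)
    norm_num
  · exact Complex.ofReal_ne_zero.2 (Real.rpow_pos_of_pos (sub_pos.2 hx.2) _).ne'

theorem Cint_add_Dint_eq (N : ℕ) {t R : ℝ} (ht : 0 < t) (hR : 0 < R) (hR' : π * R / t < 1)
    (hgap : 8 * π / t < (1 - π * R / t) ^ 2) :
    Cint N R t + Dint N R t =
      ∫ x in (1 - π * R / t)..(1 + π * R / t), commonIntegrand N t x := by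
  have hr : 0 < π * R / t := by positivity
  have hinv : t / (π * R) = (π * R / t)⁻¹ := (inv_div _ _).symm
  have hint : ∀ x y, 1 - π * R / t ≤ x → x ≤ y →
      IntervalIntegrable (commonIntegrand N t) volume x y := fun x y hx hxy =>
    ((continuousOn_commonIntegrand N ht).mono fun v hv => by
      rw [uIcc_of_le hxy] at hv
      have hle : 1 - π * R / t ≤ v := hx.trans hv.1
      exact ⟨by linarith, hgap.trans_le (by gcongr)⟩).intervalIntegrable
  rw [Cint, Dint, hinv]
  simp only [Cfun_eq_smul_commonIntegrand, Dfun_eq_smul_commonIntegrand]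
  rw [integral_Ioi_inv_sq_smul_comp_inv (fun v => commonIntegrand N t (1 + v)) hr,
    integral_Ioi_inv_sq_smul_comp_inv (fun v => commonIntegrand N t (1 - v)) hr,
    intervalIntegral.integral_comp_add_left, intervalIntegral.integral_comp_sub_left,
    add_zero, sub_zero, add_comm]
  exact intervalIntegral.integral_add_adjacent_intervals
    (hint _ _ le_rfl (by linarith)) (hint _ _ (by linarith) (by linarith))

/-- The Joukowski map `z ↦ z + δ/z`, which rationalises the square root in `pc`. -/
noncomputable def joukowski (δ z : ℝ) : ℝ := z + δ / z

/-- The phase, divided by `t`, of the oscillatory integral obtained from the Joukowski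
substitution; its stationary points with `δ < z²` reduce to `z = 1`. -/
noncomputable def saddlePhase (δ z : ℝ) : ℝ := Real.log z - z - δ / z + δ / (2 * z ^ 2)

/-- The amplitude of the oscillatory integral obtained from the Joukowski substitution. -/
noncomputable def saddleAmplitude (δ z : ℝ) : ℝ := √((1 - δ / z ^ 2) / z)

theorem hasDerivAt_joukowski (δ : ℝ) {z : ℝ} (hz : z ≠ 0) :
    HasDerivAt (joukowski δ) (1 - δ / z ^ 2) z :=
  ((hasDerivAt_id' z).fun_add ((hasDerivAt_inv hz).const_mul δ)).congr_deriv (by ring)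

theorem hasDerivAt_saddlePhase (δ : ℝ) {z : ℝ} (hz : z ≠ 0) :
    HasDerivAt (saddlePhase δ) ((1 - z) / z * (1 - δ / z ^ 2)) z := by
  have h := (((Real.hasDerivAt_log hz).fun_sub (hasDerivAt_id' z)).fun_sub
    ((hasDerivAt_inv hz).const_mul δ)).fun_add
    (((hasDerivAt_pow 2 z).fun_inv (pow_ne_zero 2 hz)).const_mul (δ / 2))
  refine (h.congr_deriv ?_).congr_of_eventuallyEq (.of_forall fun w => ?_)
  · field_simp
    ring
  · simp only [saddlePhase]
    ring

theorem one_sub_div_sq_pos {δ z : ℝ} (hz : 0 < z) (hd : δ < z ^ 2) : 0 < 1 - δ / z ^ 2 := by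
  rwa [sub_pos, div_lt_one (by positivity)]

theorem joukowski_sq_sub {δ z : ℝ} (hz : z ≠ 0) :
    joukowski δ z ^ 2 - 4 * δ = (z * (1 - δ / z ^ 2)) ^ 2 := by
  rw [joukowski]
  field_simp
  ring

theorem joukowski_sq_sub_eight_pi_div {t δ z : ℝ} (ht : t ≠ 0) (hδ : t * δ = 2 * π) (hz : z ≠ 0) :
    joukowski δ z ^ 2 - 8 * π / t = (z * (1 - δ / z ^ 2)) ^ 2 := by
  have h4 : 8 * π / t = 4 * δ := by
    field_simp
    linarith
  rw [h4, joukowski_sq_sub hz]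

theorem joukowski_pos {δ z : ℝ} (hδ : 0 ≤ δ) (hz : 0 < z) : 0 < joukowski δ z :=
  add_pos_of_pos_of_nonneg hz (by positivity)

theorem pc_joukowski {t δ z : ℝ} (ht : 0 < t) (hδ : t * δ = 2 * π) (hz : 0 < z)
    (hd : δ < z ^ 2) : pc (t * joukowski δ z / π) t = z ^ 2 / δ := by
  have hπ : π = t * δ / 2 := by linarith
  have hδ0 : 0 < δ := pos_of_mul_pos_right (hδ ▸ Real.two_pi_pos) ht.le
  have hx := joukowski_pos hδ0.le hz
  have ha : a t ^ 2 = 16 / δ := by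
    rw [a, Real.sq_sqrt (by positivity), hπ]
    field_simp
    norm_num
  have ha0 : (t * joukowski δ z / π / a t) ^ 2 = joukowski δ z ^ 2 / (4 * δ) := by
    rw [div_pow, ha, hπ]
    field_simp
    norm_num
  have hsqrt : √(1 - (a t / (t * joukowski δ z / π)) ^ 2) =
      z * (1 - δ / z ^ 2) / joukowski δ z := by
    have hv := one_sub_div_sq_pos hz hd
    rw [← inv_div, inv_pow, ha0, inv_div, ← Real.sqrt_sq (by positivity : 0 ≤ _ / joukowski δ z),
      div_pow, ← joukowski_sq_sub hz.ne', sub_div, div_self (by positivity)]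
  rw [pc, hsqrt, ha0, joukowski]
  field_simp
  ring

theorem deriv_joukowski_smul_commonIntegrand {t δ z : ℝ} (ht : 0 < t) (hδ : t * δ = 2 * π)
    (hz : 0 < z) (hd : δ < z ^ 2) :
    (1 - δ / z ^ 2) • commonIntegrand 1 t (joukowski δ z) =
      Complex.exp ((t / 2 * Real.log (t / (2 * π)) : ℝ) * I) *
        (Complex.exp ((t * saddlePhase δ z : ℝ) * I) * saddleAmplitude δ z) := by
  have hδ0 : 0 < δ := pos_of_mul_pos_right (hδ ▸ Real.two_pi_pos) ht.le
  have hv := one_sub_div_sq_pos hz hd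
  have hroot : (joukowski δ z ^ 2 - 8 * π / t) ^ ((1 : ℝ) / 4) = √(z * (1 - δ / z ^ 2)) := by
    rw [joukowski_sq_sub_eight_pi_div ht.ne' hδ hz.ne', Real.sqrt_eq_rpow, ← Real.rpow_natCast,
      ← Real.rpow_mul (by positivity)]
    norm_num
  have hamp : (1 - δ / z ^ 2) / √(z * (1 - δ / z ^ 2)) = saddleAmplitude δ z := by
    rw [saddleAmplitude, Real.sqrt_mul hz.le, Real.sqrt_div hv.le, div_mul_eq_div_div_swap,
      Real.div_sqrt]
  have hphase : -(t * joukowski δ z) + t / 2 * (Real.log (z ^ 2 / δ) + 1 / (z ^ 2 / δ)) =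
      t / 2 * Real.log (t / (2 * π)) + t * saddlePhase δ z := by
    have hlog : t / (2 * π) = δ⁻¹ := by
      rw [← hδ]
      field_simp
    rw [hlog, Real.log_inv, Real.log_div (by positivity) hδ0.ne', Real.log_pow, saddlePhase,
      joukowski]
    push_cast
    field_simp
    ring
  rw [commonIntegrand, pc_joukowski ht hδ hz hd, hroot, ← hamp, ← mul_assoc, ← Complex.exp_add,
    ← add_mul, ← Complex.ofReal_add, ← hphase, Complex.real_smul]
  push_cast
  rw [mul_div_left_comm]
  ring_nf

/-- The oscillatory integral to which the Joukowski substitution reduces `C(1,R) + D(1,R)`. -/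
noncomputable def saddleIntegral (t δ x y : ℝ) : ℂ :=
  ∫ z in x..y, Complex.exp ((t * saddlePhase δ z : ℝ) * I) * saddleAmplitude δ z

theorem integral_commonIntegrand_eq {t δ x y : ℝ} (ht : 0 < t) (hδ : t * δ = 2 * π) (hx : 0 < x)
    (hd : δ < x ^ 2) (hxy : x ≤ y) :
    ∫ v in joukowski δ x..joukowski δ y, commonIntegrand 1 t v =
      Complex.exp ((t / 2 * Real.log (t / (2 * π)) : ℝ) * I) * saddleIntegral t δ x y := by
  have hpos : ∀ z ∈ uIcc x y, 0 < z ∧ δ < z ^ 2 := fun z hz => by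
    rw [uIcc_of_le hxy] at hz
    exact ⟨hx.trans_le hz.1, hd.trans_le (by gcongr; exact hz.1)⟩
  have hδ0 : 0 < δ := pos_of_mul_pos_right (hδ ▸ Real.two_pi_pos) ht.le
  rw [← intervalIntegral.integral_deriv_smul_comp'
    (fun z hz => hasDerivAt_joukowski δ (hpos z hz).1.ne'), saddleIntegral,
    ← intervalIntegral.integral_const_mul]
  · exact intervalIntegral.integral_congr fun z hz =>
      deriv_joukowski_smul_commonIntegrand ht hδ (hpos z hz).1 (hpos z hz).2
  · refine continuousOn_const.sub (continuousOn_const.div (by fun_prop) fun z hz => ?_)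
    exact pow_ne_zero 2 (hpos z hz).1.ne'
  · refine (continuousOn_commonIntegrand 1 ht).mono ?_
    rintro _ ⟨z, hz, rfl⟩
    obtain ⟨hz0, hzd⟩ := hpos z hz
    have hv := one_sub_div_sq_pos hz0 hzd
    refine ⟨joukowski_pos hδ0.le hz0, sub_pos.1 ?_⟩
    rw [joukowski_sq_sub_eight_pi_div ht.ne' hδ hz0.ne']
    positivity

theorem saddleAmplitude_eq_sqrt_div {δ z : ℝ} (hz : 0 ≤ z) :
    saddleAmplitude δ z = √(1 - δ / z ^ 2) / √z := Real.sqrt_div' _ hz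

theorem saddleAmplitude_eq_mul_sqrt {δ z : ℝ} (hz : 0 ≤ z) :
    saddleAmplitude δ z = (1 - δ / z ^ 2) / z * (√z / √(1 - δ / z ^ 2)) := by
  rw [saddleAmplitude_eq_sqrt_div hz, div_mul_div_comm, mul_comm z, mul_div_mul_comm,
    Real.div_sqrt, Real.sqrt_div_self', mul_one_div]

theorem norm_saddleIntegral_le_of_factor {t δ x y c : ℝ} {q₁ q₂ : ℝ → ℝ} (hx : 0 < x)
    (hxy : x ≤ y)
    (hw : ∀ z ∈ Icc x y, saddleAmplitude δ z =
      c * (t * ((1 - z) / z * (1 - δ / z ^ 2)) * (q₁ z * q₂ z)))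
    (hd₁ : ∀ z ∈ Icc x y, DifferentiableAt ℝ q₁ z) (hd₂ : ∀ z ∈ Icc x y, DifferentiableAt ℝ q₂ z)
    (hm₁ : MonotoneOn q₁ (Icc x y)) (hm₂ : AntitoneOn q₂ (Icc x y))
    (h₁ : 0 ≤ q₁ x) (h₂ : 0 ≤ q₂ y) :
    ‖saddleIntegral t δ x y‖ ≤ 4 * |c| * (q₁ y * q₂ x) := by
  have hne : ∀ z ∈ Icc x y, z ≠ 0 := fun z hz => (hx.trans_le hz.1).ne'
  have hne2 : ∀ z ∈ Icc x y, z ^ 2 ≠ 0 := fun z hz => pow_ne_zero 2 (hne z hz)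
  exact norm_integral_exp_mul_I_mul_le hxy
    (fun z hz => (hasDerivAt_saddlePhase δ (hne z hz)).const_mul t)
    (by fun_prop (disch := assumption)) hw hd₁ hd₂ hm₁ hm₂ h₁ h₂

theorem differentiableAt_sqrt_one_sub_div_sq {δ z : ℝ} (hz : 0 < z) (hd : δ < z ^ 2) :
    DifferentiableAt ℝ (fun w => √(1 - δ / w ^ 2)) z := by
  have := (pow_pos hz 2).ne'
  exact DifferentiableAt.sqrt (by fun_prop (disch := assumption)) (one_sub_div_sq_pos hz hd).ne'

theorem monotoneOn_sqrt_one_sub_div_sq {δ : ℝ} (hδ : 0 ≤ δ) :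
    MonotoneOn (fun w => √(1 - δ / w ^ 2)) (Ioi 0) := fun z (hz : 0 < z) w _ hzw => by
  dsimp only
  gcongr

theorem norm_saddleIntegral_le_of_lt_one {t δ x y : ℝ} (ht : 0 < t) (hδ : 0 ≤ δ) (hx : 0 < x)
    (hd : δ < x ^ 2) (hxy : x ≤ y) (hy : y < 1) :
    ‖saddleIntegral t δ x y‖ ≤ 4 / (t * (1 - y) * √(1 - δ / x ^ 2)) := by
  have hpos : ∀ z ∈ Icc x y, 0 < z ∧ 0 < 1 - z ∧ δ < z ^ 2 := fun z hz =>
    ⟨hx.trans_le hz.1, sub_pos.2 (hz.2.trans_lt hy), hd.trans_le (by gcongr; exact hz.1)⟩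
  have hv : ∀ z ∈ Icc x y, 0 < √(1 - δ / z ^ 2) := fun z hz =>
    Real.sqrt_pos.2 (one_sub_div_sq_pos (hpos z hz).1 (hpos z hz).2.2)
  have hx' : x ∈ Icc x y := left_mem_Icc.2 hxy
  have hbound := norm_saddleIntegral_le_of_factor (t := t) (δ := δ) (c := t⁻¹) hx hxy
    (q₁ := fun z => √z / (1 - z)) (q₂ := fun z => (√(1 - δ / z ^ 2))⁻¹)
    (fun z hz => by
      have hz1 := (hpos z hz).2.1
      rw [saddleAmplitude_eq_mul_sqrt (hpos z hz).1.le]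
      field_simp)
    (fun z hz => .div (differentiableAt_id.sqrt (hpos z hz).1.ne') (by fun_prop)
      (hpos z hz).2.1.ne')
    (fun z hz => (differentiableAt_sqrt_one_sub_div_sq (hpos z hz).1 (hpos z hz).2.2).inv
      (hv z hz).ne')
    (fun _ _ w hw hzw => div_le_div₀ (Real.sqrt_nonneg w) (Real.sqrt_le_sqrt hzw)
      (hpos w hw).2.1 (by linarith))
    (fun z hz w hw hzw => inv_anti₀ (hv z hz) (monotoneOn_sqrt_one_sub_div_sq hδ (hpos z hz).1
      (hpos w hw).1 hzw))
    (div_nonneg (Real.sqrt_nonneg x) (hpos x hx').2.1.le) (by positivity)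
  refine hbound.trans ?_
  have hy' := sub_pos.2 hy
  have hvx := hv x hx'
  rw [abs_of_pos (inv_pos.2 ht)]
  calc 4 * t⁻¹ * (√y / (1 - y) * (√(1 - δ / x ^ 2))⁻¹)
      ≤ 4 * t⁻¹ * (1 / (1 - y) * (√(1 - δ / x ^ 2))⁻¹) := by
        gcongr
        exact Real.sqrt_le_one.2 hy.le
    _ = 4 / (t * (1 - y) * √(1 - δ / x ^ 2)) := by field_simp

theorem norm_saddleIntegral_le_of_one_lt {t δ x y : ℝ} (ht : 0 < t) (hδ : 0 ≤ δ) (hx : 1 < x)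
    (hd : δ < x ^ 2) (hxy : x ≤ y) :
    ‖saddleIntegral t δ x y‖ ≤ 4 * √y / (t * (x - 1) * √(1 - δ / x ^ 2)) := by
  have hpos : ∀ z ∈ Icc x y, 0 < z ∧ 0 < z - 1 ∧ δ < z ^ 2 := fun z hz =>
    ⟨by linarith [hz.1], by linarith [hz.1], hd.trans_le (by gcongr; exact hz.1)⟩
  have hv : ∀ z ∈ Icc x y, 0 < √(1 - δ / z ^ 2) := fun z hz =>
    Real.sqrt_pos.2 (one_sub_div_sq_pos (hpos z hz).1 (hpos z hz).2.2)
  have hx' : x ∈ Icc x y := left_mem_Icc.2 hxy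
  have hy' := right_mem_Icc.2 hxy
  have hbound := norm_saddleIntegral_le_of_factor (t := t) (δ := δ) (c := -t⁻¹) (by linarith) hxy
    (q₁ := fun z => √z) (q₂ := fun z => ((z - 1) * √(1 - δ / z ^ 2))⁻¹)
    (fun z hz => by
      have hz1 := (hpos z hz).2.1
      rw [saddleAmplitude_eq_mul_sqrt (hpos z hz).1.le]
      field_simp
      ring)
    (fun z hz => differentiableAt_id.sqrt (hpos z hz).1.ne')
    (fun z hz => .inv (.mul (by fun_prop)
      (differentiableAt_sqrt_one_sub_div_sq (hpos z hz).1 (hpos z hz).2.2))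
      (mul_pos (hpos z hz).2.1 (hv z hz)).ne')
    (fun z _ w _ hzw => Real.sqrt_le_sqrt hzw)
    (fun z hz w hw hzw => inv_anti₀ (mul_pos (hpos z hz).2.1 (hv z hz))
      (mul_le_mul (by linarith) (monotoneOn_sqrt_one_sub_div_sq hδ (hpos z hz).1 (hpos w hw).1 hzw)
        (hv z hz).le (hpos w hw).2.1.le))
    (Real.sqrt_nonneg x) (inv_nonneg.2 (mul_pos (hpos y hy').2.1 (hv y hy')).le)
  rw [abs_neg, abs_of_pos (inv_pos.2 ht)] at hbound
  refine hbound.trans_eq ?_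
  have := (hpos x hx').2.1
  have := hv x hx'
  field_simp

theorem norm_exp_mul_I_sub_exp_mul_I_le (x y : ℝ) :
    ‖Complex.exp (x * I) - Complex.exp (y * I)‖ ≤ |x - y| := by
  have hfactor : Complex.exp (x * I) - Complex.exp (y * I) =
      Complex.exp (y * I) * (Complex.exp (I * (x - y : ℝ)) - 1) := by
    rw [mul_sub_one, ← Complex.exp_add]
    push_cast
    ring_nf
  rw [hfactor, norm_mul, Complex.norm_exp_ofReal_mul_I, one_mul, ← Real.norm_eq_abs]
  exact Real.norm_exp_I_mul_ofReal_sub_one_le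

theorem abs_log_one_add_sub_le {y : ℝ} (hy : |y| ≤ 1 / 2) :
    |Real.log (1 + y) - (y - y ^ 2 / 2 + y ^ 3 / 3)| ≤ 2 * y ^ 4 := by
  have h := Real.abs_log_sub_add_sum_range_le (x := -y) (by rw [abs_neg]; linarith) 3
  rw [sub_neg_eq_add, abs_neg, Even.pow_abs (by decide)] at h
  calc |Real.log (1 + y) - (y - y ^ 2 / 2 + y ^ 3 / 3)| ≤ y ^ 4 / (1 - |y|) := by
        convert h using 2
        norm_num [Finset.sum_range_succ]
        ring
    _ ≤ 2 * y ^ 4 := by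
        rw [div_le_iff₀ (by linarith)]
        nlinarith [pow_nonneg (sq_nonneg y) 2]

theorem abs_sqrt_sub_one_le (x : ℝ) : |√x - 1| ≤ |x - 1| := by
  rcases le_total x 0 with hx | hx
  · rw [Real.sqrt_eq_zero_of_nonpos hx, abs_of_nonpos (by linarith : x - 1 ≤ 0)]
    norm_num
    linarith
  · calc |√x - 1| ≤ |√x - 1| * |√x + 1| :=
          le_mul_of_one_le_right (abs_nonneg _) (by
            rw [abs_of_nonneg (by positivity)]
            linarith [Real.sqrt_nonneg x])
      _ = |x - 1| := by
        rw [← abs_mul]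
        congr 1
        linear_combination Real.sq_sqrt hx

theorem half_le_one_add_of_abs_le {y : ℝ} (hy : |y| ≤ 1 / 2) : 1 / 2 ≤ 1 + y := by
  linarith [(abs_le.1 hy).1]

theorem abs_saddlePhase_one_add_sub_le {δ y : ℝ} (hδ : 0 ≤ δ) (hy : |y| ≤ 1 / 2) :
    |saddlePhase δ (1 + y) - (-(1 + δ / 2) - (y - y ^ 2 / 3) ^ 2 / 2)| ≤
      3 * y ^ 4 + 2 * δ * y ^ 2 := by
  have hz : 1 / 2 ≤ 1 + y := half_le_one_add_of_abs_le hy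
  have hz0 : 0 < 1 + y := by linarith
  have hdecomp : saddlePhase δ (1 + y) - (-(1 + δ / 2) - (y - y ^ 2 / 3) ^ 2 / 2) =
      Real.log (1 + y) - (y - y ^ 2 / 2 + y ^ 3 / 3) +
        (y ^ 4 / 18 + δ / 2 * (y / (1 + y)) ^ 2) := by
    rw [saddlePhase]
    field_simp
    ring
  have hquot : (y / (1 + y)) ^ 2 ≤ 4 * y ^ 2 := by
    rw [div_pow, div_le_iff₀ (by positivity)]
    nlinarith [sq_nonneg y, mul_le_mul hz hz (by norm_num) hz0.le]
  rw [hdecomp]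
  refine (abs_add_le _ _).trans ((add_le_add_left (abs_log_one_add_sub_le hy) _).trans ?_)
  rw [abs_of_nonneg (by positivity)]
  nlinarith [mul_le_mul_of_nonneg_left hquot hδ, pow_nonneg (sq_nonneg y) 2]

theorem abs_saddleAmplitude_one_add_sub_le {δ y : ℝ} (hδ : 0 ≤ δ) (hy : |y| ≤ 1 / 2) :
    |saddleAmplitude δ (1 + y) - (1 - 2 * y / 3)| ≤ 3 * |y| + 8 * δ := by
  have hz : 1 / 2 ≤ 1 + y := half_le_one_add_of_abs_le hy
  have hz0 : 0 < 1 + y := by linarith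
  have hinv : (1 + y)⁻¹ ≤ 2 := by
    simpa using inv_anti₀ (by norm_num) hz
  have hradicand : |(1 - δ / (1 + y) ^ 2) / (1 + y) - 1| ≤ 2 * |y| + 8 * δ := by
    have hdecomp : (1 - δ / (1 + y) ^ 2) / (1 + y) - 1 =
        -(y * (1 + y)⁻¹ + δ * (1 + y)⁻¹ ^ 3) := by
      field_simp
      ring
    rw [hdecomp, abs_neg]
    refine (abs_add_le _ _).trans (add_le_add ?_ ?_)
    · rw [abs_mul, abs_of_pos (inv_pos.2 hz0), mul_comm]
      gcongr
    · rw [abs_of_nonneg (by positivity), mul_comm]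
      gcongr
      calc (1 + y)⁻¹ ^ 3 ≤ 2 ^ 3 := by gcongr
        _ = 8 := by norm_num
  have hlin : |2 * y / 3| ≤ |y| := by
    rw [abs_div, abs_mul, abs_two, abs_of_pos (by norm_num : (0 : ℝ) < 3)]
    linarith [abs_nonneg y]
  calc |saddleAmplitude δ (1 + y) - (1 - 2 * y / 3)|
      = |(saddleAmplitude δ (1 + y) - 1) + 2 * y / 3| := by ring_nf
    _ ≤ |(1 - δ / (1 + y) ^ 2) / (1 + y) - 1| + |2 * y / 3| :=
        (abs_add_le _ _).trans (add_le_add_left (abs_sqrt_sub_one_le _) _)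
    _ ≤ 3 * |y| + 8 * δ := by linarith

theorem norm_saddleIntegrand_sub_le {t δ y : ℝ} (ht : 0 ≤ t) (hδ : 0 ≤ δ) (hy : |y| ≤ 1 / 2) :
    ‖Complex.exp ((t * saddlePhase δ (1 + y) : ℝ) * I) * saddleAmplitude δ (1 + y) -
        Complex.exp ((-(t * (1 + δ / 2)) : ℝ) * I) *
          (Complex.exp ((-(t / 2 * (y - y ^ 2 / 3) ^ 2) : ℝ) * I) * (1 - 2 * y / 3 : ℝ))‖ ≤
      3 * |y| + 8 * δ + 2 * t * (3 * y ^ 4 + 2 * δ * y ^ 2) := by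
  have hexp : Complex.exp ((-(t * (1 + δ / 2)) : ℝ) * I) *
      Complex.exp ((-(t / 2 * (y - y ^ 2 / 3) ^ 2) : ℝ) * I) =
      Complex.exp ((t * (-(1 + δ / 2) - (y - y ^ 2 / 3) ^ 2 / 2) : ℝ) * I) := by
    rw [← Complex.exp_add]
    push_cast
    ring_nf
  have hlin : |1 - 2 * y / 3| ≤ 2 := by
    rw [abs_le] at hy ⊢
    constructor <;> linarith
  have hphase := (norm_exp_mul_I_sub_exp_mul_I_le (t * saddlePhase δ (1 + y))
    (t * (-(1 + δ / 2) - (y - y ^ 2 / 3) ^ 2 / 2))).trans_eq (by rw [← mul_sub, abs_mul])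
  rw [abs_of_nonneg ht] at hphase
  have hsplit : ∀ p q : ℂ, ∀ u v : ℝ, p * u - q * v = p * ((u - v : ℝ) : ℂ) + (p - q) * v := by
    intro p q u v
    push_cast
    ring
  rw [← mul_assoc, hexp, hsplit]
  refine (norm_add_le _ _).trans (add_le_add ?_ ?_)
  · rw [norm_mul, Complex.norm_exp_ofReal_mul_I, one_mul, Complex.norm_real]
    exact abs_saddleAmplitude_one_add_sub_le hδ hy
  · rw [norm_mul, Complex.norm_real, Real.norm_eq_abs]
    calc _ ≤ t * (3 * y ^ 4 + 2 * δ * y ^ 2) * 2 := by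
          gcongr
          exact hphase.trans (by gcongr; exact abs_saddlePhase_one_add_sub_le hδ hy)
      _ = _ := by ring

theorem norm_integral_quadratic_model_sub_le {t ε : ℝ} (ht : 0 < t) (hε : 0 < ε)
    (hε' : ε ≤ 1 / 2) :
    ‖(∫ y in -ε..ε, Complex.exp ((-(t / 2 * (y - y ^ 2 / 3) ^ 2) : ℝ) * I) * (1 - 2 * y / 3 : ℝ)) -
      √(2 * π / t) * Complex.exp (-(π / 4 : ℝ) * I)‖ ≤ 10 / (t * ε) := by
  have hsubst : ∫ y in -ε..ε, Complex.exp ((-(t / 2 * (y - y ^ 2 / 3) ^ 2) : ℝ) * I) *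
      (1 - 2 * y / 3 : ℝ) =
      ∫ s in -(ε + ε ^ 2 / 3)..(ε - ε ^ 2 / 3), Complex.exp ((-(t / 2 * s ^ 2) : ℝ) * I) := by
    have hderiv : ∀ y : ℝ, HasDerivAt (fun y => y - y ^ 2 / 3) (1 - 2 * y / 3) y := fun y =>
      ((hasDerivAt_id' y).fun_sub ((hasDerivAt_pow 2 y).div_const 3)).congr_deriv (by norm_num)
    have := intervalIntegral.integral_deriv_smul_comp (a := -ε) (b := ε)
      (g := fun s : ℝ => Complex.exp ((-(t / 2 * s ^ 2) : ℝ) * I)) (fun y _ => hderiv y)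
      (by fun_prop) (by fun_prop)
    rw [show -(ε + ε ^ 2 / 3) = -ε - (-ε) ^ 2 / 3 by ring, ← this]
    simp only [Complex.real_smul, mul_comm, Function.comp_apply]
  rw [hsubst]
  refine (norm_integral_fresnel_sub_le ht (by positivity) (by nlinarith)).trans ?_
  have hleft : 4 / (t * (ε + ε ^ 2 / 3)) ≤ 4 / (t * ε) := by
    gcongr
    nlinarith
  have hright : 4 / (t * (ε - ε ^ 2 / 3)) ≤ 4 / (t * (2 / 3 * ε)) := by
    gcongr
    nlinarith
  calc _ ≤ _ := add_le_add hleft hright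
    _ = 10 / (t * ε) := by
      field_simp
      norm_num

theorem continuousOn_saddleIntegrand (t δ : ℝ) :
    ContinuousOn (fun z => Complex.exp ((t * saddlePhase δ z : ℝ) * I) * saddleAmplitude δ z)
      (Ioi 0) := by
  have hne : ∀ z ∈ Ioi (0 : ℝ), z ≠ 0 := fun z hz => (mem_Ioi.1 hz).ne'
  have hne2 : ∀ z ∈ Ioi (0 : ℝ), z ^ 2 ≠ 0 := fun z hz => pow_ne_zero 2 (hne z hz)
  have hphase : ContinuousOn (saddlePhase δ) (Ioi 0) := fun z hz =>
    (hasDerivAt_saddlePhase δ (hne z hz)).continuousAt.continuousWithinAt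
  have hamp : ContinuousOn (saddleAmplitude δ) (Ioi 0) := by
    unfold saddleAmplitude
    fun_prop (disch := assumption)
  fun_prop

theorem norm_saddleIntegral_sub_quadratic_model_le {t δ ε : ℝ} (ht : 0 ≤ t) (hδ : 0 ≤ δ)
    (hε : 0 < ε) (hε' : ε ≤ 1 / 2) :
    ‖saddleIntegral t δ (1 - ε) (1 + ε) - Complex.exp ((-(t * (1 + δ / 2)) : ℝ) * I) *
        ∫ y in -ε..ε, Complex.exp ((-(t / 2 * (y - y ^ 2 / 3) ^ 2) : ℝ) * I) *
          (1 - 2 * y / 3 : ℝ)‖ ≤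
      2 * ε * (3 * ε + 8 * δ + 2 * t * (3 * ε ^ 4 + 2 * δ * ε ^ 2)) := by
  have hshift : saddleIntegral t δ (1 - ε) (1 + ε) = ∫ y in -ε..ε,
      Complex.exp ((t * saddlePhase δ (1 + y) : ℝ) * I) * saddleAmplitude δ (1 + y) := by
    rw [intervalIntegral.integral_comp_add_left
      (fun z => Complex.exp ((t * saddlePhase δ z : ℝ) * I) * saddleAmplitude δ z)]
    rfl
  have hint : IntervalIntegrable (fun y : ℝ => Complex.exp ((t * saddlePhase δ (1 + y) : ℝ) * I) *
      saddleAmplitude δ (1 + y)) volume (-ε) ε := by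
    refine ((continuousOn_saddleIntegrand t δ).comp (f := fun y => 1 + y) (by fun_prop)
      fun y hy => ?_).intervalIntegrable
    rw [uIcc_of_le (by linarith)] at hy
    exact mem_Ioi.2 (by linarith [hy.1])
  rw [hshift, ← intervalIntegral.integral_const_mul, ← intervalIntegral.integral_sub hint
    (Continuous.intervalIntegrable (by fun_prop) _ _)]
  refine (intervalIntegral.norm_integral_le_of_norm_le_const
    (C := 3 * ε + 8 * δ + 2 * t * (3 * ε ^ 4 + 2 * δ * ε ^ 2)) fun y hy => ?_).trans_eq ?_
  · rw [uIoc_of_le (by linarith)] at hy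
    have hy' : |y| ≤ ε := abs_le.2 ⟨hy.1.le, hy.2⟩
    have h2 : y ^ 2 ≤ ε ^ 2 := sq_le_sq' hy.1.le hy.2
    have h4 : y ^ 4 ≤ ε ^ 4 := by
      simpa only [← pow_mul] using pow_le_pow_left₀ (sq_nonneg y) h2 2
    refine (norm_saddleIntegrand_sub_le ht hδ (hy'.trans hε')).trans ?_
    gcongr
  · rw [sub_neg_eq_add, abs_of_pos (by linarith)]
    ring

theorem norm_saddleIntegral_window_sub_le {t δ ε : ℝ} (ht : 0 < t) (hδ : 0 ≤ δ) (hε : 0 < ε)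
    (hε' : ε ≤ 1 / 2) :
    ‖saddleIntegral t δ (1 - ε) (1 + ε) - Complex.exp ((-(t * (1 + δ / 2)) : ℝ) * I) *
        (√(2 * π / t) * Complex.exp (-(π / 4 : ℝ) * I))‖ ≤
      2 * ε * (3 * ε + 8 * δ + 2 * t * (3 * ε ^ 4 + 2 * δ * ε ^ 2)) + 10 / (t * ε) := by
  refine (norm_sub_le_norm_sub_add_norm_sub _ _ _).trans (add_le_add
    (norm_saddleIntegral_sub_quadratic_model_le ht.le hδ hε hε') ?_)
  rw [← mul_sub, norm_mul, Complex.norm_exp_ofReal_mul_I, one_mul]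
  exact norm_integral_quadratic_model_sub_le ht hε hε'

theorem saddleIntegral_add {t δ x y w : ℝ} (hx : 0 < x) (hy : 0 < y) (hw : 0 < w) :
    saddleIntegral t δ x y + saddleIntegral t δ y w = saddleIntegral t δ x w :=
  have hint : ∀ {u v : ℝ}, 0 < u → 0 < v → IntervalIntegrable (fun z =>
      Complex.exp ((t * saddlePhase δ z : ℝ) * I) * saddleAmplitude δ z) volume u v := fun hu hv =>
    ((continuousOn_saddleIntegrand t δ).mono fun _ hz =>
      (lt_min hu hv).trans_le hz.1).intervalIntegrable
  intervalIntegral.integral_add_adjacent_intervals (hint hx hy) (hint hy hw)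

theorem norm_saddleIntegral_le_left {t δ x : ℝ} (ht : 0 < t) (hδ : 0 ≤ δ) (hx : 0 < x)
    (hd : δ < x ^ 2) (hx' : x ≤ 1 / 2) :
    ‖saddleIntegral t δ x (1 / 2)‖ ≤ 8 / (t * √(1 - δ / x ^ 2)) := by
  refine (norm_saddleIntegral_le_of_lt_one ht hδ hx hd hx' (by norm_num)).trans_eq ?_
  have := Real.sqrt_pos.2 (one_sub_div_sq_pos hx hd)
  field_simp
  norm_num

theorem norm_saddleIntegral_le_middle {t δ ε : ℝ} (ht : 0 < t) (hδ : 0 ≤ δ) (hδ' : δ ≤ 3 / 16)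
    (hε : 0 < ε) (hε' : ε ≤ 1 / 2) :
    ‖saddleIntegral t δ (1 / 2) (1 - ε)‖ ≤ 8 / (t * ε) := by
  have hv : 1 / 2 ≤ √(1 - δ / (1 / 2) ^ 2) := Real.le_sqrt_of_sq_le (by norm_num; linarith)
  calc ‖saddleIntegral t δ (1 / 2) (1 - ε)‖
      ≤ 4 / (t * (1 - (1 - ε)) * √(1 - δ / (1 / 2) ^ 2)) :=
        norm_saddleIntegral_le_of_lt_one ht hδ (by norm_num) (by linarith) (by linarith)
          (by linarith)
    _ ≤ 4 / (t * ε * (1 / 2)) := by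
        rw [sub_sub_cancel]
        gcongr
    _ = 8 / (t * ε) := by
        field_simp
        norm_num

theorem norm_saddleIntegral_le_right {t δ ε y : ℝ} (ht : 0 < t) (hδ : 0 ≤ δ) (hδ' : δ ≤ 3 / 4)
    (hε : 0 < ε) (hy : 1 + ε ≤ y) (hy' : y ≤ 4) :
    ‖saddleIntegral t δ (1 + ε) y‖ ≤ 16 / (t * ε) := by
  have hsq : 1 ≤ (1 + ε) ^ 2 := one_le_pow₀ (by linarith)
  have hv : 1 / 2 ≤ √(1 - δ / (1 + ε) ^ 2) :=
    Real.le_sqrt_of_sq_le (by linarith [div_le_self hδ hsq])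
  have hsqrt : √y ≤ 2 := Real.sqrt_le_iff.2 ⟨by norm_num, by linarith⟩
  calc ‖saddleIntegral t δ (1 + ε) y‖
      ≤ 4 * √y / (t * (1 + ε - 1) * √(1 - δ / (1 + ε) ^ 2)) :=
        norm_saddleIntegral_le_of_one_lt ht hδ (by linarith) (by linarith) hy
    _ ≤ 4 * 2 / (t * ε * (1 / 2)) := by
        rw [add_sub_cancel_left]
        gcongr
    _ = 16 / (t * ε) := by
        field_simp
        norm_num

theorem norm_saddleIntegral_sub_le {t δ ε x y : ℝ} (ht : 0 < t) (hδ : 0 ≤ δ) (hδ' : δ ≤ 3 / 16)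
    (hε : 0 < ε) (hε' : ε ≤ 1 / 2) (hx : 0 < x) (hd : δ < x ^ 2) (hx' : x ≤ 1 / 2)
    (hy : 1 + ε ≤ y) (hy' : y ≤ 4) :
    ‖saddleIntegral t δ x y - Complex.exp ((-(t * (1 + δ / 2)) : ℝ) * I) *
        (√(2 * π / t) * Complex.exp (-(π / 4 : ℝ) * I))‖ ≤
      2 * ε * (3 * ε + 8 * δ + 2 * t * (3 * ε ^ 4 + 2 * δ * ε ^ 2)) + 34 / (t * ε) +
        8 / (t * √(1 - δ / x ^ 2)) := by
  have hsplit : saddleIntegral t δ x y = saddleIntegral t δ (1 - ε) (1 + ε) +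
      (saddleIntegral t δ x (1 / 2) + saddleIntegral t δ (1 / 2) (1 - ε) +
        saddleIntegral t δ (1 + ε) y) := by
    rw [saddleIntegral_add hx (by norm_num) (by linarith), ← add_assoc,
      add_comm (saddleIntegral t δ (1 - ε) _),
      saddleIntegral_add hx (by linarith) (by linarith),
      saddleIntegral_add hx (by linarith) (by linarith)]
  have hwindow := norm_saddleIntegral_window_sub_le ht hδ hε hε'
  have hleft := norm_saddleIntegral_le_left ht hδ hx hd hx'
  have hmiddle := norm_saddleIntegral_le_middle ht hδ hδ' hε hε'
  have hright := norm_saddleIntegral_le_right ht hδ (by linarith) hε hy hy'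
  have hsum : 34 / (t * ε) = 10 / (t * ε) + 8 / (t * ε) + 16 / (t * ε) := by ring
  rw [hsplit, add_sub_right_comm]
  refine (norm_add_le_of_le hwindow norm_add₃_le).trans ?_
  linarith

theorem Cint_add_Dint_eq_saddleIntegral {t δ R x y : ℝ} (ht : 0 < t) (hδ : t * δ = 2 * π)
    (hR : 0 < R) (hx : 0 < x) (hd : δ < x ^ 2) (hxy : x ≤ y)
    (hRx : 1 - π * R / t = joukowski δ x) (hRy : 1 + π * R / t = joukowski δ y) :
    Cint 1 R t + Dint 1 R t =
      Complex.exp ((t / 2 * Real.log (t / (2 * π)) : ℝ) * I) * saddleIntegral t δ x y := by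
  have hδ0 : 0 < δ := pos_of_mul_pos_right (hδ ▸ Real.two_pi_pos) ht.le
  have hv := one_sub_div_sq_pos hx hd
  rw [Cint_add_Dint_eq 1 ht hR, hRx, hRy, integral_commonIntegrand_eq ht hδ hx hd hxy]
  · linarith [joukowski_pos hδ0.le hx]
  · rw [hRx, ← sub_pos, joukowski_sq_sub_eight_pi_div ht.ne' hδ hx.ne']
    positivity

theorem exists_joukowski_eq {δ r : ℝ} (hδ : 0 ≤ δ) (hδ' : δ ≤ 1 / 4) (hr : 3 / 2 ≤ r)
    (hr' : r ≤ 4) : ∃ y ∈ Icc (5 / 4 : ℝ) 4, joukowski δ y = r := by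
  have hcont : ContinuousOn (joukowski δ) (Icc (5 / 4) 4) := fun z hz =>
    (hasDerivAt_joukowski δ (by linarith [hz.1])).continuousAt.continuousWithinAt
  refine intermediate_value_Icc (by norm_num) hcont ⟨?_, ?_⟩ <;> rw [joukowski] <;> linarith

theorem one_sub_pi_mul_Rmax_div {t δ : ℝ} (ht : 0 < t) (hδ : t * δ = 2 * π) (hp : 0 < pcm t) :
    1 - π * Rmax t / t = joukowski δ √(δ * pcm t) := by
  have hδ0 : 0 < δ := pos_of_mul_pos_right (hδ ▸ Real.two_pi_pos) ht.le
  have ha : π * a t = 2 * t * √δ := by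
    rw [a, ← Real.sqrt_sq Real.pi_pos.le, ← Real.sqrt_mul (by positivity),
      Real.sqrt_sq Real.pi_pos.le, ← Real.sqrt_sq (by positivity : 0 ≤ 2 * t),
      ← Real.sqrt_mul (by positivity)]
    congr 1
    field_simp
    linear_combination (-4) * hδ
  have hsq := Real.sq_sqrt hδ0.le
  have hsqp := Real.sq_sqrt hp.le
  rw [joukowski, Rmax, Real.sqrt_mul hδ0.le]
  field_simp
  rw [hsqp]
  linear_combination (pcm t + 1) * √δ * ha + 2 * t * hsq

theorem exists_Cint_add_Dint_Rmax_eq {t δ : ℝ} (ht : 0 < t) (hδ : t * δ = 2 * π)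
    (hδ' : δ ≤ 1 / 32) (hp : 1 < pcm t) (hp' : pcm t ≤ 2) :
    ∃ y ∈ Icc (5 / 4 : ℝ) 4, Cint 1 (Rmax t) t + Dint 1 (Rmax t) t =
      Complex.exp ((t / 2 * Real.log (t / (2 * π)) : ℝ) * I) *
        saddleIntegral t δ √(δ * pcm t) y := by
  have hδ0 : 0 < δ := pos_of_mul_pos_right (hδ ▸ Real.two_pi_pos) ht.le
  set x := √(δ * pcm t)
  have hx0 : 0 < x := by positivity
  have hx2 : x ^ 2 = δ * pcm t := Real.sq_sqrt (by positivity)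
  have hx1 : x ≤ 1 / 4 := Real.sqrt_le_iff.2 ⟨by norm_num, by nlinarith⟩
  have hd : δ < x ^ 2 := hx2 ▸ lt_mul_of_one_lt_right hδ0 hp
  have hJ : joukowski δ x ≤ 1 / 2 := by
    have : δ / x ≤ x := (div_le_iff₀ hx0).2 (by nlinarith)
    rw [joukowski]
    linarith
  have hRx := one_sub_pi_mul_Rmax_div ht hδ (by linarith)
  have hJ0 := joukowski_pos hδ0.le hx0
  have hR : 0 < Rmax t := by
    by_contra! h
    have : π * Rmax t / t ≤ 0 :=
      div_nonpos_of_nonpos_of_nonneg (mul_nonpos_of_nonneg_of_nonpos Real.pi_pos.le h) ht.le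
    linarith
  obtain ⟨y, hy, hRy⟩ := exists_joukowski_eq (r := 1 + π * Rmax t / t) hδ0.le (by linarith)
    (by linarith) (by linarith)
  exact ⟨y, hy, Cint_add_Dint_eq_saddleIntegral ht hδ hR hx0 hd (by linarith [hy.1]) hRx hRy.symm⟩

theorem norm_Cint_add_Dint_Rmax_sub_saddle_le {t ε : ℝ} (hε : 0 < ε) (hε' : ε ≤ 1 / 16)
    (htε : t * ε ^ 3 = 1) (hp : 1 < pcm t) (hp' : pcm t ≤ 2) :
    ‖Cint 1 (Rmax t) t + Dint 1 (Rmax t) t -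
        Complex.exp ((t / 2 * Real.log (t / (2 * π)) : ℝ) * I) *
          (Complex.exp ((-(t + π) : ℝ) * I) *
            (√(2 * π / t) * Complex.exp (-(π / 4 : ℝ) * I)))‖ ≤
      56 * ε ^ 2 + 8 / (t * √(1 - 1 / pcm t)) := by
  have hε3 : ε ^ 3 ≤ 1 / 4096 := (pow_le_pow_left₀ hε.le hε' 3).trans_eq (by norm_num)
  have ht : 0 < t := pos_of_mul_pos_left (htε ▸ one_pos) (by positivity)
  set δ := 2 * π * ε ^ 3 with hδε
  have hδ0 : 0 < δ := by positivity
  have hδ : t * δ = 2 * π := by rw [hδε, mul_left_comm, htε, mul_one]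
  have hδ' : δ ≤ 1 / 32 := by nlinarith [Real.pi_lt_four]
  have hx2 : √(δ * pcm t) ^ 2 = δ * pcm t := Real.sq_sqrt (by positivity)
  have hratio : δ / √(δ * pcm t) ^ 2 = 1 / pcm t := by
    rw [hx2, div_mul_cancel_left₀ hδ0.ne', one_div]
  have hphase : t + π = t * (1 + δ / 2) := by linear_combination (-(1 : ℝ) / 2) * hδ
  have hwidth : 34 / (t * ε) = 34 * ε ^ 2 := by
    field_simp
    linear_combination (-1 : ℝ) * htε
  have hwindow : 2 * ε * (3 * ε + 8 * δ + 2 * t * (3 * ε ^ 4 + 2 * δ * ε ^ 2)) ≤ 22 * ε ^ 2 := by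
    have hcoeff : 2 * ε * (3 * ε + 8 * δ + 2 * t * (3 * ε ^ 4 + 2 * δ * ε ^ 2)) =
        (18 + 16 * π * ε * (1 + 2 * ε)) * ε ^ 2 := by
      linear_combination (12 * ε ^ 2) * htε + 8 * ε ^ 3 * hδ + 16 * ε * hδε
    rw [hcoeff]
    gcongr
    nlinarith [Real.pi_lt_d2, Real.pi_pos, mul_pos Real.pi_pos hε]
  obtain ⟨y, hy, heq⟩ := exists_Cint_add_Dint_Rmax_eq ht hδ hδ' hp hp'
  rw [heq, ← mul_sub, norm_mul, Complex.norm_exp_ofReal_mul_I, one_mul, hphase, ← hratio]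
  refine (norm_saddleIntegral_sub_le ht hδ0.le (by linarith) hε (by linarith) (by positivity)
    ((lt_mul_of_one_lt_right hδ0 hp).trans_eq hx2.symm)
    (Real.sqrt_le_iff.2 ⟨by norm_num, by nlinarith⟩) (by linarith [hy.1]) hy.2).trans ?_
  linarith

theorem abs_rpow_neg_quarter_sub_one_le {w : ℝ} (hw : 0 ≤ w) (hw' : w ≤ 1 / 2) :
    |(1 - w) ^ (-(1 : ℝ) / 4) - 1| ≤ 2 * w := by
  have hpos : 0 < 1 - w := by linarith
  have hone : 1 ≤ (1 - w) ^ (-(1 : ℝ) / 4) :=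
    Real.one_le_rpow_of_pos_of_le_one_of_nonpos hpos (by linarith) (by norm_num)
  rw [abs_of_nonneg (sub_nonneg.2 hone), sub_le_iff_le_add']
  calc (1 - w) ^ (-(1 : ℝ) / 4) ≤ (1 - w) ^ (-1 : ℝ) :=
        Real.rpow_le_rpow_of_exponent_ge hpos (by linarith) (by norm_num)
    _ = (1 - w)⁻¹ := Real.rpow_neg_one _
    _ ≤ 1 + 2 * w := by
        rw [inv_le_iff_one_le_mul₀ hpos]
        nlinarith

theorem norm_exp_mul_I_sub_mul_exp_mul_I_le (c θ φ : ℝ) :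
    ‖Complex.exp (θ * I) - c * Complex.exp (φ * I)‖ ≤ |θ - φ| + |c - 1| := by
  have hsplit : Complex.exp (θ * I) - c * Complex.exp (φ * I) =
      Complex.exp (θ * I) - Complex.exp (φ * I) - (c - 1 : ℝ) * Complex.exp (φ * I) := by
    push_cast
    ring
  rw [hsplit]
  refine (norm_sub_le _ _).trans (add_le_add (norm_exp_mul_I_sub_exp_mul_I_le θ φ) ?_)
  rw [norm_mul, Complex.norm_exp_ofReal_mul_I, mul_one, Complex.norm_real, Real.norm_eq_abs]

theorem norm_main_term_sub_le {t : ℝ} (ht : 16 * π ≤ t) :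
    ‖Complex.exp ((t / 2 * Real.log (t / (2 * π)) : ℝ) * I) *
          (Complex.exp ((-(t + π) : ℝ) * I) *
            (√(2 * π / t) * Complex.exp (-(π / 4 : ℝ) * I))) -
        (√(2 * π) * (1 - 8 * π / t) ^ (-(1 : ℝ) / 4) * t ^ (-(1 : ℝ) / 2) : ℝ) *
          Complex.exp (-I * (t - t / 2 * Real.log (t / (2 * π)) + π + 2 * π ^ 2 / t : ℝ) -
            I * (π / 4 : ℝ))‖ ≤ 80 / t := by
  have hπ := Real.pi_pos
  have ht0 : 0 < t := by linarith
  set θ := t / 2 * Real.log (t / (2 * π)) - t - π - π / 4 with hθ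
  set c := (1 - 8 * π / t) ^ (-(1 : ℝ) / 4)
  have hsqrt : √(2 * π) * c * t ^ (-(1 : ℝ) / 2) = √(2 * π / t) * c := by
    rw [Real.sqrt_div (by positivity), Real.sqrt_eq_rpow t, neg_div, Real.rpow_neg ht0.le]
    ring
  have hleft : Complex.exp ((t / 2 * Real.log (t / (2 * π)) : ℝ) * I) *
      (Complex.exp ((-(t + π) : ℝ) * I) * (√(2 * π / t) * Complex.exp (-(π / 4 : ℝ) * I))) =
      √(2 * π / t) * Complex.exp (θ * I) := by
    rw [mul_left_comm (Complex.exp _) (√(2 * π / t) : ℂ),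
      mul_left_comm (Complex.exp _) (√(2 * π / t) : ℂ), ← Complex.exp_add, ← Complex.exp_add, hθ]
    push_cast
    ring_nf
  have hright : -I * (t - t / 2 * Real.log (t / (2 * π)) + π + 2 * π ^ 2 / t : ℝ) -
      I * (π / 4 : ℝ) = (θ - 2 * π ^ 2 / t : ℝ) * I := by
    rw [hθ]
    push_cast
    ring
  rw [hleft, hright, hsqrt, Complex.ofReal_mul, mul_assoc, ← mul_sub, norm_mul, Complex.norm_real,
    Real.norm_of_nonneg (Real.sqrt_nonneg _)]
  have hsqrt_le : √(2 * π / t) ≤ 1 := by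
    rw [Real.sqrt_le_one, div_le_one ht0]
    linarith
  have hc : |c - 1| ≤ 2 * (8 * π / t) :=
    abs_rpow_neg_quarter_sub_one_le (by positivity) (by rw [div_le_iff₀ ht0]; linarith)
  refine (mul_le_of_le_one_left (norm_nonneg _) hsqrt_le).trans
    ((norm_exp_mul_I_sub_mul_exp_mul_I_le c θ _).trans ?_)
  rw [sub_sub_cancel, abs_of_pos (by positivity)]
  calc 2 * π ^ 2 / t + |c - 1| ≤ 2 * π ^ 2 / t + 2 * (8 * π / t) := by gcongr
    _ = (2 * π ^ 2 + 16 * π) / t := by ring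
    _ ≤ 80 / t := by
        gcongr
        nlinarith [Real.pi_lt_d2]

theorem norm_Cint_add_Dint_Rmax_sub_le {t ε : ℝ} (hε : 0 < ε) (hε' : ε ≤ 1 / 16)
    (htε : t * ε ^ 3 = 1) (hp : 1 < pcm t) (hp' : pcm t ≤ 2) :
    ‖Cint 1 (Rmax t) t + Dint 1 (Rmax t) t -
        (√(2 * π) * (1 - 8 * π / t) ^ (-(1 : ℝ) / 4) * t ^ (-(1 : ℝ) / 2) : ℝ) *
          Complex.exp (-I * (t - t / 2 * Real.log (t / (2 * π)) + π + 2 * π ^ 2 / t : ℝ) -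
            I * (π / 4 : ℝ))‖ ≤
      136 * ε ^ 2 + 8 / (t * √(1 - 1 / pcm t)) := by
  have hinv : t⁻¹ = ε ^ 3 := inv_eq_of_mul_eq_one_right htε
  have hlarge : 16 * π ≤ t := by
    have : t⁻¹ ≤ (64 : ℝ)⁻¹ := by
      rw [hinv]
      exact (pow_le_pow_left₀ hε.le hε' 3).trans (by norm_num)
    have ht : 0 < t := inv_pos.1 (hinv ▸ pow_pos hε 3)
    linarith [(inv_le_inv₀ ht (by norm_num)).1 this, Real.pi_lt_four]
  have hmain : 80 / t ≤ 80 * ε ^ 2 := by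
    rw [div_eq_mul_inv, hinv]
    gcongr 80 * ?_
    exact pow_le_pow_of_le_one hε.le (by linarith) (by norm_num)
  refine (norm_sub_le_norm_sub_add_norm_sub _ _ _).trans (add_le_add
    (norm_Cint_add_Dint_Rmax_sub_saddle_le hε hε' htε hp hp') (norm_main_term_sub_le hlarge)
    |>.trans ?_)
  linarith

theorem div_mul_sqrt_one_sub_inv_le {t ε κ : ℝ} (hε : 0 < ε) (htε : t * ε ^ 3 = 1) (hκ : 0 < κ)
    (hκε : κ * ε ≤ 1) : 8 / (t * √(1 - 1 / (1 + κ * ε))) ≤ 16 / κ * ε ^ 2 := by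
  have ht : 0 < t := pos_of_mul_pos_left (htε ▸ one_pos) (by positivity)
  have hratio : 1 - 1 / (1 + κ * ε) = κ * ε / (1 + κ * ε) := by
    field_simp
    ring
  have hsqrt : κ * ε / 2 ≤ √(1 - 1 / (1 + κ * ε)) := by
    refine Real.le_sqrt_of_sq_le ?_
    rw [hratio, le_div_iff₀ (by positivity)]
    nlinarith [mul_pos hκ hε]
  calc 8 / (t * √(1 - 1 / (1 + κ * ε))) ≤ 8 / (t * (κ * ε / 2)) := by gcongr
    _ = 16 / κ * ε ^ 2 := by
        field_simp
        linear_combination (-16 : ℝ) * htε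

theorem mul_rpow_neg_third_pow_three {t : ℝ} (ht : 0 < t) : t * (t ^ (-(1 : ℝ) / 3)) ^ 3 = 1 := by
  rw [← Real.rpow_mul_natCast ht.le]
  norm_num [Real.rpow_neg_one, ht.ne']

theorem exists_pos_forall_rpow_neg_third_le {b : ℝ} (hb : 0 < b) :
    ∃ t₀ > 0, ∀ t ≥ t₀, t ^ (-(1 : ℝ) / 3) ≤ b := by
  have htendsto : Tendsto (fun t : ℝ => t ^ (-(1 : ℝ) / 3)) atTop (𝓝 0) := by
    simpa only [neg_div] using tendsto_rpow_neg_atTop (by norm_num : (0 : ℝ) < 1 / 3)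
  obtain ⟨t₀, h⟩ :=
    ((htendsto.eventually_le_const hb).and (eventually_gt_atTop 0)).exists_forall_of_atTop
  exact ⟨t₀, (h t₀ le_rfl).2, fun t ht => (h t ht).1⟩

theorem rpow_neg_two_thirds_eq_sq {t : ℝ} (ht : 0 ≤ t) :
    t ^ (-(2 : ℝ) / 3) = (t ^ (-(1 : ℝ) / 3)) ^ 2 := by
  rw [← Real.rpow_mul_natCast ht]
  norm_num

end

/-- Lemma B1.6: with `R = R_max(t)`,
`C(1,R) + D(1,R) = √(2π)(1 − 8π/t)^{−1/4} t^{−1/2} e^{−i(t − (t/2)log(t/2π) + π + 2π²/t) − iπ/4} + O(t^{−2/3})`. -/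
theorem lemmaB16 :
    ∃ c : ℝ, c > 0 ∧ ∃ t₀ : ℝ, t₀ > 0 ∧ ∀ t : ℝ, t ≥ t₀ →
      ‖Cint 1 (Rmax t) t + Dint 1 (Rmax t) t -
          ((Real.sqrt (2 * Real.pi) * (1 - 8 * Real.pi / t) ^ (-(1 : ℝ) / 4) *
              t ^ (-(1 : ℝ) / 2) : ℝ) : ℂ) *
            Complex.exp (-Complex.I *
              ((t - t / 2 * Real.log (t / (2 * Real.pi)) + Real.pi + 2 * Real.pi ^ 2 / t
                  : ℝ) : ℂ) - Complex.I * ((Real.pi / 4 : ℝ) : ℂ))‖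
        ≤ c * t ^ (-(2 : ℝ) / 3) := by
  set κ := eta * Real.sqrt (8 * Real.pi) with hκ
  have hκ0 : 0 < κ := by
    rw [hκ, eta]
    positivity
  obtain ⟨t₀, ht₀, hsmall⟩ := exists_pos_forall_rpow_neg_third_le
    (lt_min (by norm_num : (0 : ℝ) < 1 / 16) (inv_pos.2 hκ0))
  refine ⟨136 + 16 / κ, by positivity, t₀, ht₀, fun t ht => ?_⟩
  have ht0 : 0 < t := ht₀.trans_le ht
  obtain ⟨hε', hκε⟩ := le_min_iff.1 (hsmall t ht)
  have htε := mul_rpow_neg_third_pow_three ht0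
  have hε : 0 < t ^ (-(1 : ℝ) / 3) := by positivity
  have hp : pcm t = 1 + κ * t ^ (-(1 : ℝ) / 3) := rfl
  rw [rpow_neg_two_thirds_eq_sq ht0.le]
  generalize t ^ (-(1 : ℝ) / 3) = ε at *
  have hκε' : κ * ε ≤ 1 := (le_inv_mul_iff₀ hκ0).1 (by rwa [mul_one])
  have hbound := norm_Cint_add_Dint_Rmax_sub_le hε hε' htε
    (by linarith [mul_pos hκ0 hε]) (by linarith)
  rw [hp] at hbound
  linarith [div_mul_sqrt_one_sub_inv_le hε htε hκ0 hκε']
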